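/- Let F be a union-closed family on n elements with m sets. If H(F) ≤ 3, then there exists an element x ∈ {1, …, n} that belongs to more than m/2 of the sets of F. -/

import Mathlib

open Finset

/-- The minimal members of a family of finite sets: those `A` such that no
member `B ≠ A` satisfies `B ⊆ A`. -/
def minimalSets (G : Finset (Finset ℕ)) : Finset (Finset ℕ) :=
  G.filter fun A => ∀ B ∈ G, B ≠ A → ¬ B ⊆ A

/-- The family remaining after removing the first `i` layers of the height
decomposition. -/
def rest (F : Finset (Finset ℕ)) : ℕ → Finset (Finset ℕ)
  | 0 => F
  | i + 1 => rest F i \ minimalSets (rest F i)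

/-- The `i`-th layer `π_i` of the height decomposition (meaningful for `i ≥ 1`):
`π_{i+1}` is the family of minimal members of `F \ (π₁ ∪ ⋯ ∪ π_i)`. -/
def layer (F : Finset (Finset ℕ)) : ℕ → Finset (Finset ℕ)
  | 0 => ∅
  | i + 1 => minimalSets (rest F i)

/-- The height number `H(F)`: the least `H` with `F = π₁ ∪ ⋯ ∪ π_H`,
equivalently the least `H` with `rest F H = ∅`. -/
noncomputable def height (F : Finset (Finset ℕ)) : ℕ :=
  sInf {H : ℕ | rest F H = ∅}

/-- `F` is a union-closed family on `n` elements with `m` sets: a finite family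
of `m` distinct nonempty finite sets whose union is `{1, …, n}`, closed under
unions. -/
def IsUC (F : Finset (Finset ℕ)) (n m : ℕ) : Prop :=
  F.Nonempty ∧ F.card = m ∧ (∀ A ∈ F, A.Nonempty) ∧
    F.sup id = Finset.Icc 1 n ∧ ∀ A ∈ F, ∀ B ∈ F, A ∪ B ∈ F

/-- The tent `T(A)` of a set `A` of level `i ≥ 2`: the family
`{A} ∪ {B ∈ π_{i−1} : B ⊆ A}`. -/
def tent (F : Finset (Finset ℕ)) (i : ℕ) (A : Finset ℕ) : Finset (Finset ℕ) :=
  insert A ((layer F (i - 1)).filter fun B => B ⊆ A)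

/-- `F` is separating: every pair of distinct elements of `{1, …, n}` is
separated by some member of `F`. -/
def Separating (F : Finset (Finset ℕ)) (n : ℕ) : Prop :=
  ∀ x ∈ Finset.Icc 1 n, ∀ y ∈ Finset.Icc 1 n, x ≠ y →
    ∃ A ∈ F, (x ∈ A ∧ y ∉ A) ∨ (y ∈ A ∧ x ∉ A)

theorem rest_up (F : Finset (Finset ℕ)) (i : ℕ) : ∀ A ∈ rest F i, ∀ B ∈ F, A ⊆ B → B ∈ rest F i := by
  induction i with
  | zero => intro A _ B hB _; exact hB
  | succ i ih =>
    intro A hA B hB hAB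
    simp only [rest, minimalSets, mem_sdiff, mem_filter, not_and, not_forall, not_not] at hA ⊢
    obtain ⟨hA1, hA2⟩ := hA
    obtain ⟨C, hC, hne, hCA⟩ := hA2 hA1
    refine ⟨ih A hA1 B hB hAB, fun _ => ⟨C, hC, ?_, hCA.trans hAB⟩⟩
    rintro rfl
    exact hne (subset_antisymm hCA hAB)

theorem rest_ssub (F : Finset (Finset ℕ)) (i : ℕ) (A B : Finset ℕ) (hA : A ∈ rest F i) (hB : B ∈ F)
    (hAB : A ⊂ B) : B ∈ rest F (i+1) := by
  have h1 := rest_up F i A hA B hB hAB.1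
  simp only [rest, minimalSets, mem_sdiff, mem_filter, not_and, not_forall, not_not]
  exact ⟨h1, fun _ => ⟨A, hA, hAB.ne, hAB.1⟩⟩

theorem rest_anti (F : Finset (Finset ℕ)) : Antitone (rest F) :=
  antitone_nat_of_succ_le fun _ => sdiff_subset

theorem rest_card (F : Finset (Finset ℕ)) (i : ℕ) : rest F i = ∅ ∨ (rest F i).card + i ≤ F.card := by
  induction i with
  | zero => right; simp [rest]
  | succ i ih =>
    by_cases he : rest F (i+1) = ∅
    · exact Or.inl he
    right
    by_cases h0 : rest F i = ∅
    · exact absurd (by simp [rest, h0]) he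
    obtain ⟨A, hA⟩ := (rest F i).exists_minimal (nonempty_iff_ne_empty.2 h0)
    have hAm : A ∈ minimalSets (rest F i) := by
      simp only [minimalSets, mem_filter]
      refine ⟨hA.1, fun B hB hne hBA => hne (subset_antisymm hBA (hA.2 hB hBA))⟩
    have : rest F (i+1) ⊂ rest F i := by
      refine ⟨sdiff_subset, fun hs => ?_⟩
      have := hs hA.1
      simp only [rest, mem_sdiff] at this
      exact this.2 hAm
    have := card_lt_card this
    rcases ih with ih | ih
    · exact absurd ih h0
    omega

theorem rest_three (F : Finset (Finset ℕ)) (h : height F ≤ 3) : rest F 3 = ∅ := by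
  have hne : {H : ℕ | rest F H = ∅}.Nonempty := by
    refine ⟨F.card + 1, ?_⟩
    rcases rest_card F (F.card + 1) with h | h
    · exact h
    · omega
  have h1 : rest F (height F) = ∅ := Nat.sInf_mem hne
  have h2 := rest_anti F h
  rw [h1] at h2
  exact subset_empty.1 h2

theorem abstract_lemma (G : Finset (Finset ℕ)) (U : Finset ℕ) (hU : U.Nonempty)
    (hsub : ∀ A ∈ G, A ⊂ U)
    (hint : ∀ A ∈ G, ∀ B ∈ G, (A ∩ B).Nonempty → A ∩ B ∈ G)
    (hch : ∀ A ∈ G, ∀ B ∈ G, ∀ C ∈ G, A ⊂ B → ¬ B ⊂ C) :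
    ∃ x ∈ U, 2 * (G.filter fun A => x ∈ A).card ≤ G.card := by
  -- intersections of distinct sets are minimal
  have hmin : ∀ A ∈ G, ∀ B ∈ G, A ≠ B → ∀ D ∈ G, D ⊆ A ∩ B → D = A ∩ B := by
    intro A hA B hB hne D hD hDs
    by_contra hDn
    have hss : D ⊂ A ∩ B := hDs.ssubset_of_ne hDn
    have hG : A ∩ B ∈ G := hint A hA B hB (by
      rw [nonempty_iff_ne_empty]; intro he; rw [he] at hss; exact not_ssubset_empty _ hss)
    by_cases h1 : A ∩ B = A
    · have h2 : A ∩ B ≠ B := fun h => hne (h1.symm.trans h)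
      exact hch D hD _ hG B hB hss (inter_subset_right.ssubset_of_ne h2)
    · exact hch D hD _ hG A hA hss (inter_subset_left.ssubset_of_ne h1)
  rcases G.eq_empty_or_nonempty with rfl | ⟨A₀, hA₀⟩
  · obtain ⟨x, hx⟩ := hU; exact ⟨x, hx, by simp⟩
  by_cases hcard : G.card ≤ 1
  · obtain ⟨x, hxU, hx⟩ := exists_of_ssubset (hsub A₀ hA₀)
    refine ⟨x, hxU, ?_⟩
    rw [filter_eq_empty_iff.2]
    · simp
    · intro B hB
      rwa [card_le_one.1 hcard B hB A₀ hA₀]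
  by_cases hat : ∃ x ∈ U, ∀ S ∈ G, x ∈ S → ∃ D ∈ G, D ⊂ S
  · obtain ⟨x, hxU, hx⟩ := hat
    refine ⟨x, hxU, ?_⟩
    have : (G.filter fun A => x ∈ A).card ≤ 1 := by
      rw [card_le_one]
      intro A hA B hB
      rw [mem_filter] at hA hB
      by_contra hne
      have hxm : x ∈ A ∩ B := mem_inter.2 ⟨hA.2, hB.2⟩
      obtain ⟨D, hD, hDs⟩ := hx _ (hint A hA.1 B hB.1 ⟨x, hxm⟩) hxm
      exact hDs.ne (hmin A hA.1 B hB.1 hne D hD hDs.1)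
    omega
  push Not at hat
  have key : ∀ S ∈ G, (∀ D ∈ G, ¬ D ⊂ S) → ∀ B ∈ G, (S ∩ B).Nonempty → S ⊆ B := by
    intro S hS hm B hB hne
    by_contra hn
    exact hm _ (hint S hS B hB hne) (inter_subset_left.ssubset_of_ne fun h => hn (inter_eq_left.1 h))
  obtain ⟨x, hx⟩ := hU
  obtain ⟨S, hS, hxS, hSm⟩ := hat x hx
  obtain ⟨y, hy, hyS⟩ := exists_of_ssubset (hsub S hS)
  have hboth : (G.filter fun A => x ∈ A ∧ y ∈ A).card ≤ (G.filter fun A => ¬ (x ∈ A ∨ y ∈ A)).card := by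
    rcases (G.filter fun A => x ∈ A ∧ y ∈ A).eq_empty_or_nonempty with he | ⟨B, hB⟩
    · simp [he]
    have h1 : (G.filter fun A => x ∈ A ∧ y ∈ A).card ≤ 1 := by
      rw [card_le_one]
      intro A hA B hB
      rw [mem_filter] at hA hB
      by_contra hne
      have hs : S ⊆ A ∩ B := subset_inter
        (key S hS hSm A hA.1 ⟨x, mem_inter.2 ⟨hxS, hA.2.1⟩⟩)
        (key S hS hSm B hB.1 ⟨x, mem_inter.2 ⟨hxS, hB.2.1⟩⟩)
      have := hmin A hA.1 B hB.1 hne S hS hs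
      exact hyS (this ▸ mem_inter.2 ⟨hA.2.2, hB.2.2⟩)
    rw [mem_filter] at hB
    obtain ⟨z, hz, hzB⟩ := exists_of_ssubset (hsub B hB.1)
    obtain ⟨T, hT, hzT, hTm⟩ := hat z hz
    refine h1.trans (card_pos.2 ⟨T, mem_filter.2 ⟨hT, ?_⟩⟩)
    rintro (h | h)
    · exact hzB (key T hT hTm B hB.1 ⟨x, mem_inter.2 ⟨h, hB.2.1⟩⟩ hzT)
    · exact hzB (key T hT hTm B hB.1 ⟨y, mem_inter.2 ⟨h, hB.2.2⟩⟩ hzT)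
  have e1 := card_union_add_card_inter (G.filter fun A => x ∈ A) (G.filter fun A => y ∈ A)
  rw [← filter_or, ← filter_and] at e1
  have e2 := card_filter_add_card_filter_not (s := G) (fun A => x ∈ A ∨ y ∈ A)
  by_cases hc : 2 * (G.filter fun A => x ∈ A).card ≤ G.card
  · exact ⟨x, hx, hc⟩
  · exact ⟨y, hy, by omega⟩

/-- If `H(F) ≤ 3`, then some element of `{1, …, n}` belongs to
more than `m/2` of the sets of `F`. -/
theorem frankl_of_height_le_three (n m : ℕ) (F : Finset (Finset ℕ))
    (hF : IsUC F n m) (h : height F ≤ 3) :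
    ∃ x ∈ Finset.Icc 1 n, 2 * (F.filter fun A => x ∈ A).card > m := by
  obtain ⟨hne, hm, hpos, hsup, huc⟩ := hF
  have h3 := rest_three F h
  have hchain : ∀ A ∈ F, ∀ B ∈ F, ∀ C ∈ F, ∀ D ∈ F, A ⊂ B → B ⊂ C → ¬ C ⊂ D := by
    intro A hA B hB C hC D hD hAB hBC hCD
    have := rest_ssub F 2 C D (rest_ssub F 1 B C (rest_ssub F 0 A B hA hB hAB) hC hBC) hD hCD
    rw [h3] at this
    exact notMem_empty _ this
  set U := Finset.Icc 1 n with hUdef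
  have hUF : U ∈ F := by
    rw [← hsup, ← sup'_eq_sup hne]
    exact sup'_mem (F : Set (Finset ℕ)) (fun a ha b hb => huc a ha b hb) F hne id (fun i hi => hi)
  have hle : ∀ A ∈ F, A ⊆ U := fun A hA => hsup ▸ le_sup (f := id) hA
  have hinj : Set.InjOn (fun A => U \ A) (F.erase U : Finset (Finset ℕ)) := by
    intro A hA B hB hAB
    have hA' := hle A (mem_of_mem_erase hA)
    have hB' := hle B (mem_of_mem_erase hB)
    have : U \ (U \ A) = U \ (U \ B) := congrArg (fun X => U \ X) hAB
    rwa [Finset.sdiff_sdiff_eq_self hA', Finset.sdiff_sdiff_eq_self hB'] at this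
  have hss : ∀ A ∈ F, ∀ B ∈ F, U \ A ⊂ U \ B → B ⊂ A := by
    intro A hA B hB hs
    have h1 : B ⊆ A := by
      intro b hb
      by_contra hbA
      have := hs.1 (mem_sdiff.2 ⟨hle B hB hb, hbA⟩)
      exact (mem_sdiff.1 this).2 hb
    refine h1.ssubset_of_ne ?_
    rintro rfl
    exact hs.ne rfl
  obtain ⟨x, hxU, hx⟩ := abstract_lemma ((F.erase U).image fun A => U \ A) U (hpos U hUF) (by
      intro A hA
      obtain ⟨A, kA, rfl⟩ := mem_image.1 hA
      have hAF := mem_of_mem_erase kA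
      obtain ⟨a, ha⟩ := hpos A hAF
      exact ⟨sdiff_subset, fun hs => (mem_sdiff.1 (hs (hle A hAF ha))).2 ha⟩) (by
      intro A hA B hB hn
      obtain ⟨A, kA, rfl⟩ := mem_image.1 hA
      obtain ⟨B, kB, rfl⟩ := mem_image.1 hB
      rw [← sdiff_union_distrib] at hn ⊢
      refine mem_image.2 ⟨A ∪ B, mem_erase.2 ⟨?_, huc A (mem_of_mem_erase kA) B (mem_of_mem_erase kB)⟩, rfl⟩
      intro he
      rw [he] at hn
      simp at hn) (by
      intro A hA B hB C hC hAB hBC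
      obtain ⟨A, kA, rfl⟩ := mem_image.1 hA
      obtain ⟨B, kB, rfl⟩ := mem_image.1 hB
      obtain ⟨C, kC, rfl⟩ := mem_image.1 hC
      have hA' := mem_of_mem_erase kA
      have hB' := mem_of_mem_erase kB
      have hC' := mem_of_mem_erase kC
      exact hchain C hC' B hB' A hA' U hUF (hss B hB' C hC' hBC) (hss A hA' B hB' hAB)
        ((hle A hA').ssubset_of_ne (ne_of_mem_erase kA)))
  refine ⟨x, hxU, ?_⟩
  rw [card_image_of_injOn hinj, filter_image, card_image_of_injOn (hinj.mono (by
    intro A hA; exact (mem_filter.1 hA).1)), card_erase_of_mem hUF] at hx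
  have e : ((F.erase U).filter fun A => x ∈ U \ A) = F.filter fun A => ¬ x ∈ A := by
    ext A
    simp only [mem_filter, mem_erase, mem_sdiff]
    constructor
    · rintro ⟨⟨_, h1⟩, _, h2⟩; exact ⟨h1, h2⟩
    · rintro ⟨h1, h2⟩
      exact ⟨⟨fun he => h2 (he ▸ hxU), h1⟩, hxU, h2⟩
  rw [e] at hx
  have e2 := card_filter_add_card_filter_not (s := F) (fun A => x ∈ A)
  have := card_pos.2 hne
  omega
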